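/- For every Gauss code G: P_Ḡ(t) = P_G(t⁻¹), and P_{G*}(t) = − P_G(t⁻¹). That is, the Affine Index Polynomial replaces t by t⁻¹ when the orientation of the knot is reversed, and changes global sign together with t ↦ t⁻¹ when the knot is replaced by its mirror image. -/

import Mathlib

open Finset

/-- A Gauss code with `n` crossings: the `2*n` points are arranged in the cyclic order
`0, 1, …, 2*n - 1` on `Fin (2*n)`; each pair `(c, x)` of a crossing `c : Fin n` and a
label `x : Bool` (`true` = O = over, `false` = U = under) occupies a distinct point
`pt (c, x)`, and each crossing carries a sign `±1`. -/
structure GaussCode (n : ℕ) where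
  pt : Fin n × Bool → Fin (2 * n)
  inj : Function.Injective pt
  sign : Fin n → ℤ
  sign_unit : ∀ c, sign c = 1 ∨ sign c = -1

namespace GaussCode

/-- The cyclic distance from `i` forward to `j` in `Fin m`. -/
def cdist {m : ℕ} (i j : Fin m) : ℕ := (j.val + m - i.val) % m

/-- The cyclically next point after `i`. -/
def next {m : ℕ} (i : Fin m) : Fin m := ⟨(i.val + 1) % m, Nat.mod_lt _ i.pos⟩

variable {n : ℕ}

/-- `firstO G i c` holds when the first occurrence of the crossing `c`, reading the
points cyclically forward starting from the arc immediately preceding the point `i`,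
carries the label O. (Arcs are indexed by the point they immediately precede.) -/
def firstO (G : GaussCode n) (i : Fin (2 * n)) (c : Fin n) : Prop :=
  cdist i (G.pt (c, true)) < cdist i (G.pt (c, false))

instance (G : GaussCode n) (i : Fin (2 * n)) (c : Fin n) : Decidable (G.firstO i c) :=
  inferInstanceAs (Decidable (_ < _))

/-- The Cheng coloring `λ` of the arc immediately preceding the point `i`: the sum of
`ε c` over all crossings `c` whose first occurrence, reading cyclically forward from
this arc, carries the label O. -/
def lam (G : GaussCode n) (i : Fin (2 * n)) : ℤ :=
  ∑ c : Fin n, if G.firstO i c then G.sign c else 0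

/-- The writhe of a Gauss code: the sum of the signs of its crossings. -/
def wr (G : GaussCode n) : ℤ := ∑ c : Fin n, G.sign c

/-- The weight `W(c) = λ_O(c) - λ_U(c) - ε(c)` of a crossing `c`, where `λ_O(c)`
(resp. `λ_U(c)`) is `λ` of the arc immediately preceding the O (resp. U) point of `c`. -/
def W (G : GaussCode n) (c : Fin n) : ℤ :=
  G.lam (G.pt (c, true)) - G.lam (G.pt (c, false)) - G.sign c

open LaurentPolynomial in
/-- The affine index polynomial `P_G(t) = Σ_c ε(c) (t^{W(c)} - 1) ∈ ℤ[t,t⁻¹]`. -/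
noncomputable def P (G : GaussCode n) : LaurentPolynomial ℤ :=
  ∑ c : Fin n, G.sign c • (T (G.W c) - 1)

end GaussCode

namespace GaussCode

/-- The reverse `Ḡ` of a Gauss code `G`: the same points, labels and signs, but with
the reversed cyclic order.  The point at position `v` of `G` sits at position
`2*n - 1 - v` of `Ḡ`, so that the traversal order of `Ḡ` is the reverse of that of `G`.
It encodes the knot with reversed orientation; crossing signs are unchanged. -/
def rev {n : ℕ} (G : GaussCode n) : GaussCode n where
  pt := fun p => ⟨2 * n - 1 - (G.pt p).val, by have := (G.pt p).isLt; omega⟩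
  inj := by
    intro p q h
    apply G.inj
    have h1 := (G.pt p).isLt
    have h2 := (G.pt q).isLt
    rw [Fin.ext_iff] at h ⊢
    simp only at h
    omega
  sign := G.sign
  sign_unit := G.sign_unit

/-- The arc of the reverse code corresponding to a given arc: the arc of `G` between
the points at positions `i - 1` and `i` (the arc indexed by `i`) is, in `Ḡ`, the arc
between the points at positions `2*n - 1 - i` and `(2*n - i) % (2*n)`, hence is
indexed by `(2*n - i) % (2*n)`. -/
def revArc {m : ℕ} (i : Fin m) : Fin m := ⟨(m - i.val) % m, Nat.mod_lt _ i.pos⟩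

end GaussCode

namespace GaussCode

/-- The mirror image `G*` of a Gauss code `G`: the same points and cyclic order, but
with the labels O and U interchanged at every point and with every sign negated. -/
def mirror {n : ℕ} (G : GaussCode n) : GaussCode n where
  pt := fun p => G.pt (p.1, !p.2)
  inj := by
    rintro ⟨c₁, x₁⟩ ⟨c₂, x₂⟩ h
    have h' := G.inj h
    rw [Prod.ext_iff] at h' ⊢
    exact ⟨h'.1, by simpa using h'.2⟩
  sign := fun c => -G.sign c
  sign_unit := by
    intro c
    rcases G.sign_unit c with h | h <;> simp [h]

/-!
Both operations negate every weight; the mirror image also negates the signs, whence its minus sign.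
For the mirror image, each crossing is first met at the other label and its sign is negated, so the
colour `λ` of every arc becomes `λ - wr`, and the arcs before the O and U points of a crossing trade
places.

For the reverse, reading backwards from an arc meets the two points of each crossing in the opposite
order, so `λ` becomes `wr - λ`. The arc preceding a point in the reverse is the one following it in
the original; passing an O point lowers `λ` by `ε`, and passing a U point raises it by `ε`. The
correction `-ε(c)` in `W(c)` is exactly what makes these two shifts amount to a change of sign.
-/

section CyclicDistance

variable {m : ℕ}

theorem cdist_eq_val_sub (i j : Fin m) : cdist i j = (j - i).val := by
  have hi := i.isLt
  rw [cdist, Fin.val_sub]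
  congr 1
  omega

theorem next_eq_add_one [NeZero m] (i : Fin m) : next i = i + 1 :=
  Fin.ext (by simp only [next, Fin.val_add, Fin.val_one', Nat.add_mod_mod])

theorem revArc_eq_neg [NeZero m] (i : Fin m) : revArc i = -i :=
  Fin.ext (Fin.val_neg' i).symm

theorem revArc_next (i : Fin m) : revArc (next i) = i.rev := by
  obtain _ | k := m
  · exact i.elim0
  · rw [revArc_eq_neg, next_eq_add_one, neg_add_rev, ← sub_eq_add_neg, ← zero_add i, Fin.rev_add,
      Fin.rev_zero, zero_add, ← Fin.neg_last, neg_neg]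

theorem cdist_injective (i : Fin m) : Function.Injective (cdist i) := by
  have : NeZero m := ⟨i.pos.ne'⟩
  intro j k h
  simpa only [cdist_eq_val_sub, Fin.val_inj, sub_left_inj] using h

theorem cdist_self (i : Fin m) : cdist i i = 0 := by
  have : NeZero m := ⟨i.pos.ne'⟩
  rw [cdist_eq_val_sub, sub_self, Fin.val_zero]

theorem cdist_revArc_rev_lt_iff (i j k : Fin m) :
    cdist (revArc i) j.rev < cdist (revArc i) k.rev ↔ cdist i k < cdist i j := by
  have : NeZero m := ⟨i.pos.ne'⟩
  simp only [cdist_eq_val_sub, revArc_eq_neg, sub_neg_eq_add, ← Fin.rev_sub, Fin.val_fin_lt,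
    Fin.rev_lt_rev]

theorem cdist_pos_of_ne {i j : Fin m} (h : i ≠ j) : 0 < cdist i j :=
  Nat.pos_of_ne_zero fun h₀ => h (cdist_injective i ((cdist_self i).trans h₀.symm))

theorem cdist_next_self_add_one (i : Fin m) : cdist (next i) i + 1 = m := by
  obtain _ | k := m
  · exact i.elim0
  · rw [cdist_eq_val_sub, next_eq_add_one, sub_add_cancel_left, Fin.coe_neg_one]

theorem cdist_next_add_one {i j : Fin m} (h : i ≠ j) : cdist (next i) j + 1 = cdist i j := by
  have : NeZero m := ⟨i.pos.ne'⟩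
  have hpos := cdist_pos_of_ne h
  rw [cdist_eq_val_sub] at hpos
  rw [cdist_eq_val_sub, cdist_eq_val_sub, next_eq_add_one, ← sub_sub,
    Fin.val_sub_one_of_ne_zero (sub_ne_zero.mpr h.symm), Nat.sub_add_cancel hpos]

theorem cdist_next_lt_iff {i j k : Fin m} (hj : i ≠ j) (hk : i ≠ k) :
    cdist (next i) j < cdist (next i) k ↔ cdist i j < cdist i k := by
  rw [← cdist_next_add_one hj, ← cdist_next_add_one hk, Nat.add_lt_add_iff_right]

theorem cdist_next_lt_cdist_next_self {i j : Fin m} (h : i ≠ j) :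
    cdist (next i) j < cdist (next i) i := by
  have hlt : cdist i j < m := Nat.mod_lt _ i.pos
  have hj := cdist_next_add_one h
  have hi := cdist_next_self_add_one i
  omega

end CyclicDistance

section Symmetries

variable {n : ℕ} (G : GaussCode n)

theorem rev_sign : G.rev.sign = G.sign := rfl

theorem rev_pt (p : Fin n × Bool) : G.rev.pt p = (G.pt p).rev := by
  ext
  simp only [rev, Fin.val_rev]
  omega

theorem mirror_sign (c : Fin n) : G.mirror.sign c = -G.sign c := rfl

theorem pt_over_ne_pt_under (c : Fin n) : G.pt (c, true) ≠ G.pt (c, false) :=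
  G.inj.ne (by simp)

theorem not_firstO_iff (i : Fin (2 * n)) (c : Fin n) :
    ¬ G.firstO i c ↔ cdist i (G.pt (c, false)) < cdist i (G.pt (c, true)) := by
  rw [firstO, not_lt]
  exact ((cdist_injective i).ne (G.pt_over_ne_pt_under c)).symm.le_iff_lt

theorem firstO_mirror (i : Fin (2 * n)) (c : Fin n) : G.mirror.firstO i c ↔ ¬ G.firstO i c :=
  (G.not_firstO_iff i c).symm

theorem firstO_rev_revArc (i : Fin (2 * n)) (c : Fin n) :
    G.rev.firstO (revArc i) c ↔ ¬ G.firstO i c := by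
  rw [firstO, rev_pt, rev_pt, cdist_revArc_rev_lt_iff, not_firstO_iff]

theorem firstO_pt_over (c : Fin n) : G.firstO (G.pt (c, true)) c := by
  rw [firstO, cdist_self]
  exact cdist_pos_of_ne (G.pt_over_ne_pt_under c)

theorem not_firstO_pt_under (c : Fin n) : ¬ G.firstO (G.pt (c, false)) c := by
  rw [firstO, cdist_self]
  exact Nat.not_lt_zero _

theorem not_firstO_next_pt_over (c : Fin n) : ¬ G.firstO (next (G.pt (c, true))) c :=
  (G.not_firstO_iff _ c).mpr (cdist_next_lt_cdist_next_self (G.pt_over_ne_pt_under c))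

theorem firstO_next_pt_under (c : Fin n) : G.firstO (next (G.pt (c, false))) c :=
  cdist_next_lt_cdist_next_self (G.pt_over_ne_pt_under c).symm

theorem firstO_next_pt_of_ne {c d : Fin n} (h : c ≠ d) (x : Bool) :
    G.firstO (next (G.pt (d, x))) c ↔ G.firstO (G.pt (d, x)) c :=
  cdist_next_lt_iff (G.inj.ne (by simp [h.symm])) (G.inj.ne (by simp [h.symm]))

theorem sum_not_firstO (i : Fin (2 * n)) :
    (∑ c, if ¬ G.firstO i c then G.sign c else 0) = G.wr - G.lam i := by
  rw [eq_sub_iff_add_eq', lam, wr, ← sum_filter, ← sum_filter]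
  exact sum_filter_add_sum_filter_not univ (G.firstO i) G.sign

theorem lam_mirror (i : Fin (2 * n)) : G.mirror.lam i = G.lam i - G.wr := by
  rw [← neg_sub, ← sum_not_firstO, ← sum_neg_distrib]
  simp only [lam, firstO_mirror, mirror_sign, neg_ite, neg_zero]

theorem lam_rev_revArc (i : Fin (2 * n)) : G.rev.lam (revArc i) = G.wr - G.lam i := by
  rw [← sum_not_firstO]
  simp only [lam, firstO_rev_revArc, rev_sign]

theorem lam_next_pt_sub_lam (d : Fin n) (x : Bool) :
    G.lam (next (G.pt (d, x))) - G.lam (G.pt (d, x)) =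
      (if G.firstO (next (G.pt (d, x))) d then G.sign d else 0) -
        if G.firstO (G.pt (d, x)) d then G.sign d else 0 := by
  rw [lam, lam, ← sum_sub_distrib]
  refine Fintype.sum_eq_single d fun c hc => ?_
  simp only [G.firstO_next_pt_of_ne hc, sub_self]

theorem lam_next_pt_over (c : Fin n) :
    G.lam (next (G.pt (c, true))) = G.lam (G.pt (c, true)) - G.sign c := by
  have h := G.lam_next_pt_sub_lam c true
  rw [if_neg (G.not_firstO_next_pt_over c), if_pos (G.firstO_pt_over c)] at h
  linarith

theorem lam_next_pt_under (c : Fin n) :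
    G.lam (next (G.pt (c, false))) = G.lam (G.pt (c, false)) + G.sign c := by
  have h := G.lam_next_pt_sub_lam c false
  rw [if_pos (G.firstO_next_pt_under c), if_neg (G.not_firstO_pt_under c)] at h
  linarith

theorem lam_rev_pt (p : Fin n × Bool) :
    G.rev.lam (G.rev.pt p) = G.wr - G.lam (next (G.pt p)) := by
  rw [rev_pt, ← revArc_next, lam_rev_revArc]

theorem W_rev (c : Fin n) : G.rev.W c = -G.W c := by
  rw [W, W, lam_rev_pt, lam_rev_pt, lam_next_pt_over, lam_next_pt_under, rev_sign]
  ring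

theorem W_mirror (c : Fin n) : G.mirror.W c = -G.W c := by
  have mirror_over : G.mirror.pt (c, true) = G.pt (c, false) := rfl
  have mirror_under : G.mirror.pt (c, false) = G.pt (c, true) := rfl
  rw [W, W, mirror_over, mirror_under, lam_mirror, lam_mirror, mirror_sign]
  ring

open LaurentPolynomial in
theorem invert_P : invert G.P = ∑ c, G.sign c • (T (-G.W c) - 1) := by
  simp only [P, map_sum, map_zsmul, map_sub, invert_T, map_one]

end Symmetries

open LaurentPolynomial in
/-- For every Gauss code `G`: `P_Ḡ(t) = P_G(t⁻¹)` and
`P_{G*}(t) = - P_G(t⁻¹)`, where `Ḡ` is the reverse and `G*` the mirror image of `G`,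
and `t ↦ t⁻¹` is the substitution `LaurentPolynomial.invert`.  That is, the Affine
Index Polynomial replaces `t` by `t⁻¹` under orientation reversal, and changes global
sign together with `t ↦ t⁻¹` under mirror image. -/
theorem P_rev_P_mirror {n : ℕ} (G : GaussCode n) :
    G.rev.P = invert G.P ∧ G.mirror.P = - invert G.P := by
  rw [invert_P]
  constructor
  · simp only [P, W_rev, rev_sign]
  · simp only [P, W_mirror, mirror_sign, neg_smul, sum_neg_distrib]

end GaussCode
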